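/- Let 𝓛 be a second-order elliptic operator on ℝ^d satisfying the standing assumptions, and suppose the constant function 1 is a ground state of 𝓛 in ℝ^d. Let V be a bounded, locally Hölder continuous potential with V ≤ 0 on ℝ^d. Then every bounded C² function u on ℝ^d satisfying 𝓛u + Vu = 0 is constant. -/

import Mathlib

open Metric Set Filter

noncomputable section

/-- `ℝ^d` as a Euclidean space. -/
abbrev Euc (d : ℕ) := EuclideanSpace ℝ (Fin d)

/-- First partial derivative `∂u/∂xᵢ`. -/
def pd {d : ℕ} (u : Euc d → ℝ) (i : Fin d) (x : Euc d) : ℝ :=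
  fderiv ℝ u x (EuclideanSpace.single i 1)

/-- Second partial derivative `∂²u/∂xᵢ∂xⱼ`. -/
def pd2 {d : ℕ} (u : Euc d → ℝ) (i j : Fin d) (x : Euc d) : ℝ :=
  fderiv ℝ (fun y => pd u j y) x (EuclideanSpace.single i 1)

/-- The second-order operator `𝓛u = Σ aᶦʲ ∂ᵢⱼu + Σ bᶦ ∂ᵢu`. -/
def Lop {d : ℕ} (a : Euc d → Matrix (Fin d) (Fin d) ℝ) (b : Euc d → Euc d)
    (u : Euc d → ℝ) (x : Euc d) : ℝ :=
  (∑ i, ∑ j, a x i j * pd2 u i j x) + ∑ i, b x i * pd u i x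

/-- Frobenius norm of a matrix. -/
def frob {d : ℕ} (m : Matrix (Fin d) (Fin d) ℝ) : ℝ :=
  Real.sqrt (∑ i, ∑ j, (m i j) ^ 2)

/-- The quadratic form `⟨ξ, m ξ⟩`. -/
def quadForm {d : ℕ} (m : Matrix (Fin d) (Fin d) ℝ) (ξ : Euc d) : ℝ :=
  ∑ i, ∑ j, m i j * ξ i * ξ j

/-- Local Hölder continuity on a set. -/
def LocallyHolderOn {E F : Type*} [PseudoMetricSpace E] [PseudoMetricSpace F]
    (f : E → F) (s : Set E) : Prop :=
  ∀ x ∈ s, ∃ (C r : NNReal), 0 < r ∧ r ≤ 1 ∧ ∃ ε > 0, HolderOnWith C r f (Metric.ball x ε ∩ s)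

/-- Local Hölder continuity. -/
def LocallyHolder {E F : Type*} [PseudoMetricSpace E] [PseudoMetricSpace F] (f : E → F) : Prop :=
  LocallyHolderOn f Set.univ

/-- The set of `λ ∈ ℝ` admitting a positive C² supersolution of `𝓛φ + Vφ ≤ λφ` on `D`. -/
def supersolutions {d : ℕ} (a : Euc d → Matrix (Fin d) (Fin d) ℝ) (b : Euc d → Euc d)
    (V : Euc d → ℝ) (D : Set (Euc d)) : Set ℝ :=
  {lam | ∃ φ : Euc d → ℝ, (∀ x ∈ D, 0 < φ x) ∧ ContDiffOn ℝ 2 φ D ∧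
    ∀ x ∈ D, Lop a b φ x + V x * φ x ≤ lam * φ x}

/-- The generalized principal eigenvalue `λ*(𝓛,V)` on `D`. -/
def lamStar {d : ℕ} (a : Euc d → Matrix (Fin d) (Fin d) ℝ) (b : Euc d → Euc d)
    (V : Euc d → ℝ) (D : Set (Euc d)) : ℝ :=
  sInf (supersolutions a b V D)

/-- `λ*(𝓛,V)` is finite: the defining set is nonempty and bounded below. -/
def lamStarFinite {d : ℕ} (a : Euc d → Matrix (Fin d) (Fin d) ℝ) (b : Euc d → Euc d)
    (V : Euc d → ℝ) (D : Set (Euc d)) : Prop :=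
  (supersolutions a b V D).Nonempty ∧ BddBelow (supersolutions a b V D)

/-- A ground state of `𝓛 + W` in the open connected set `D`: a positive C² solution of
minimal growth at infinity. -/
def IsGroundState {d : ℕ} (a : Euc d → Matrix (Fin d) (Fin d) ℝ) (b : Euc d → Euc d)
    (W : Euc d → ℝ) (u : Euc d → ℝ) (D : Set (Euc d)) : Prop :=
  (∀ x ∈ D, 0 < u x) ∧ ContDiffOn ℝ 2 u D ∧ (∀ x ∈ D, Lop a b u x + W x * u x = 0) ∧
  ∀ K : Set (Euc d), IsCompact K → K ⊆ D →
    ∀ v : Euc d → ℝ, ContDiffOn ℝ 2 v (D \ K) → (∀ x ∈ D \ K, 0 < v x) →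
      (∀ x ∈ D \ K, Lop a b v x + W x * v x ≤ 0) →
      ∃ K' : Set (Euc d), IsCompact K' ∧ K ⊆ K' ∧ K' ⊆ D ∧
        ∃ κ > 0, ∀ x ∈ D \ K', κ * u x ≤ v x

/-- Membership in `C₀⁺(ℝ^d)`: continuous, nonnegative, not identically zero, vanishing
at infinity. -/
def C0plus {d : ℕ} (h : Euc d → ℝ) : Prop :=
  Continuous h ∧ (∀ x, 0 ≤ h x) ∧ (∃ x, h x ≠ 0) ∧ Tendsto h (cocompact (Euc d)) (nhds 0)

/-- `λ*` is strictly monotone at `V` on the right. -/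
def StrictMonoRight {d : ℕ} (a : Euc d → Matrix (Fin d) (Fin d) ℝ) (b : Euc d → Euc d)
    (V : Euc d → ℝ) : Prop :=
  ∀ h : Euc d → ℝ, C0plus h →
    lamStar a b V Set.univ < lamStar a b (fun x => V x + h x) Set.univ

/-- `λ*` is strictly monotone at `V` (on both sides). -/
def StrictMonoAt {d : ℕ} (a : Euc d → Matrix (Fin d) (Fin d) ℝ) (b : Euc d → Euc d)
    (V : Euc d → ℝ) : Prop :=
  ∀ h : Euc d → ℝ, C0plus h →
    lamStar a b (fun x => V x - h x) Set.univ < lamStar a b V Set.univ ∧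
    lamStar a b V Set.univ < lamStar a b (fun x => V x + h x) Set.univ

/-- Standing assumptions (A1)–(A3) with `b` Borel measurable and locally bounded. -/
structure StandingB {d : ℕ} (a : Euc d → Matrix (Fin d) (Fin d) ℝ) (b : Euc d → Euc d) : Prop where
  posdef : ∀ x, (a x).PosDef
  aLip : ∀ R > 0, ∃ C > 0, ∀ x y : Euc d, ‖x‖ ≤ R → ‖y‖ ≤ R →
    frob (a x - a y) ≤ C * ‖x - y‖
  bMeas : Measurable b
  bLocBdd : ∀ R > 0, ∃ C, ∀ x : Euc d, ‖x‖ ≤ R → ‖b x‖ ≤ C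
  nondeg : ∀ R > 0, ∃ C > 0, ∀ x : Euc d, ‖x‖ ≤ R → ∀ ξ : Euc d,
    C⁻¹ * ‖ξ‖ ^ 2 ≤ quadForm (a x) ξ
  growth : ∃ C₀ > 0, ∀ x : Euc d,
    max (∑ i, b x i * x i) 0 + frob (a x) ≤ C₀ * (1 + ‖x‖ ^ 2)

/-- Standing assumptions (A1)–(A3) with `b` locally Hölder continuous. -/
structure StandingH {d : ℕ} (a : Euc d → Matrix (Fin d) (Fin d) ℝ) (b : Euc d → Euc d) : Prop where
  posdef : ∀ x, (a x).PosDef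
  aLip : ∀ R > 0, ∃ C > 0, ∀ x y : Euc d, ‖x‖ ≤ R → ‖y‖ ≤ R →
    frob (a x - a y) ≤ C * ‖x - y‖
  bHolder : LocallyHolder b
  nondeg : ∀ R > 0, ∃ C > 0, ∀ x : Euc d, ‖x‖ ≤ R → ∀ ξ : Euc d,
    C⁻¹ * ‖ξ‖ ^ 2 ≤ quadForm (a x) ξ
  growth : ∃ C₀ > 0, ∀ x : Euc d,
    max (∑ i, b x i * x i) 0 + frob (a x) ≤ C₀ * (1 + ‖x‖ ^ 2)

/-!
If `𝓛u + Vu = 0` with `V ≤ 0`, then `𝓛(u²) = 2⟨∇u, a∇u⟩ + 2u𝓛u = 2⟨∇u, a∇u⟩ - 2Vu² ≥ 0`, so `u²`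
is a bounded subsolution of `𝓛`. Let `M` be its supremum. If `M` were not attained, `M - u²` would
be a positive supersolution, hence bounded below by a positive constant off a compact set by the
minimal growth of the ground state `1`, and on the compact set by continuity; this contradicts the
choice of `M`. So `M` is attained and `u²` is constant by the strong maximum principle. Then
`𝓛(u²) = 0` forces `⟨∇u, a∇u⟩ = 0`, and `∇u = 0` by ellipticity.
-/

open Topology
open scoped Gradient

section Calculus

variable {E : Type*} [NormedAddCommGroup E] [NormedSpace ℝ E]

lemma deriv_deriv_nonpos_of_isLocalMax {f : ℝ → ℝ} {x : ℝ} (hf : ContinuousAt f x)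
    (hx : IsLocalMax f x) : deriv (deriv f) x ≤ 0 := by
  by_contra! hpos
  have hmin : IsLocalMin f x := isLocalMin_of_deriv_deriv_pos hpos hx.deriv_eq_zero hf
  have hconst : f =ᶠ[𝓝 x] fun _ => f x := Filter.EventuallyLE.antisymm hx hmin
  have hzero : deriv (deriv f) x = 0 := by simp [hconst.deriv.deriv_eq]
  exact hpos.ne' hzero

lemma deriv_deriv_comp_add_smul {f : E → ℝ} {x : E} (hf : ContDiffAt ℝ 2 f x) (v : E) :
    deriv (deriv fun t : ℝ => f (x + t • v)) 0 = fderiv ℝ (fderiv ℝ f) x v v := by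
  have hline (t : ℝ) : HasDerivAt (fun t : ℝ => x + t • v) v t := by
    simpa using ((hasDerivAt_id t).smul_const v).const_add x
  have htendsto : Tendsto (fun t : ℝ => x + t • v) (𝓝 0) (𝓝 x) := by
    exact Continuous.tendsto' (by fun_prop) 0 x (by simp)
  have hderiv : (deriv fun t : ℝ => f (x + t • v)) =ᶠ[𝓝 0] fun t => fderiv ℝ f (x + t • v) v := by
    filter_upwards [htendsto.eventually (hf.eventually (by simp))] with t ht
    exact ((ht.differentiableAt two_ne_zero).hasFDerivAt.comp_hasDerivAt t (hline t)).deriv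
  have hfderiv : HasFDerivAt (fderiv ℝ f) (fderiv ℝ (fderiv ℝ f) x) (x + (0 : ℝ) • v) := by
    simpa using
      ((hf.fderiv_right (m := 1) (by norm_num)).differentiableAt one_ne_zero).hasFDerivAt
  rw [hderiv.deriv_eq]
  have hsecond : HasDerivAt (fun t : ℝ => fderiv ℝ f (x + t • v))
      (fderiv ℝ (fderiv ℝ f) x v) 0 := hfderiv.comp_hasDerivAt 0 (hline 0)
  simpa using (hsecond.clm_apply (hasDerivAt_const 0 v)).deriv

lemma fderiv_fderiv_apply_self_nonpos_of_isLocalMax {f : E → ℝ} {x : E}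
    (hf : ContDiffAt ℝ 2 f x) (hx : IsLocalMax f x) (v : E) :
    fderiv ℝ (fderiv ℝ f) x v v ≤ 0 := by
  have hline : ContinuousAt (fun t : ℝ => x + t • v) 0 := by fun_prop
  have hx0 : x + (0 : ℝ) • v = x := by simp
  rw [← deriv_deriv_comp_add_smul hf]
  refine deriv_deriv_nonpos_of_isLocalMax (hf.continuousAt.comp_of_eq hline hx0) ?_
  exact IsMaxFilter.comp_tendsto (f := f) (by rwa [hx0]) (by simpa using hline.tendsto)

end Calculus

section QuadraticForms

lemma sum_mul_apply_nonpos_of_posSemidef {ι V : Type*} [Fintype ι] [AddCommGroup V] [Module ℝ V]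
    {m : Matrix ι ι ℝ} (hm : m.PosSemidef) {B : LinearMap.BilinForm ℝ V} (hB : ∀ v, B v v ≤ 0)
    (e : ι → V) : ∑ i, ∑ j, m i j * B (e i) (e j) ≤ 0 := by
  obtain ⟨n, v, rfl⟩ := Matrix.posSemidef_iff_eq_sum_vecMulVec.1 hm
  have hsum : ∑ i, ∑ j, (∑ k, Matrix.vecMulVec (v k) (star (v k))) i j * B (e i) (e j) =
      ∑ k, B (∑ i, v k i • e i) (∑ i, v k i • e i) := by
    simp only [Matrix.sum_apply, Matrix.vecMulVec_apply, star_trivial, Finset.sum_mul,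
      LinearMap.BilinForm.sum_left, LinearMap.BilinForm.sum_right, LinearMap.BilinForm.smul_left,
      LinearMap.BilinForm.smul_right, Finset.mul_sum]
    rw [Finset.sum_comm_cycle]
    refine Finset.sum_congr rfl fun k _ => ?_
    rw [Finset.sum_comm]
    exact Finset.sum_congr rfl fun i _ => Finset.sum_congr rfl fun j _ => by ring
  rw [hsum]
  exact Finset.sum_nonpos fun k _ => hB _

variable {d : ℕ} {m : Matrix (Fin d) (Fin d) ℝ}

lemma quadForm_eq_dotProduct_mulVec (m : Matrix (Fin d) (Fin d) ℝ) (ξ : Euc d) :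
    quadForm m ξ = ξ.ofLp ⬝ᵥ m.mulVec ξ.ofLp := by
  simp only [quadForm, dotProduct, Matrix.mulVec, Finset.mul_sum]
  exact Finset.sum_congr rfl fun i _ => Finset.sum_congr rfl fun j _ => by ring

lemma quadForm_nonneg (hm : m.PosSemidef) (ξ : Euc d) : 0 ≤ quadForm m ξ := by
  simpa [quadForm_eq_dotProduct_mulVec] using hm.dotProduct_mulVec_nonneg ξ.ofLp

lemma quadForm_pos (hm : m.PosDef) {ξ : Euc d} (hξ : ξ ≠ 0) : 0 < quadForm m ξ := by
  simpa [quadForm_eq_dotProduct_mulVec] using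
    hm.dotProduct_mulVec_pos (x := ξ.ofLp) (by simpa using hξ)

lemma abs_apply_le_frob (m : Matrix (Fin d) (Fin d) ℝ) (i j : Fin d) : |m i j| ≤ frob m := by
  refine Real.abs_le_sqrt ?_
  calc m i j ^ 2 ≤ ∑ j', m i j' ^ 2 :=
        Finset.single_le_sum (f := fun j' => m i j' ^ 2) (fun _ _ => sq_nonneg _)
          (Finset.mem_univ j)
    _ ≤ ∑ i', ∑ j', m i' j' ^ 2 :=
        Finset.single_le_sum (f := fun i' => ∑ j', m i' j' ^ 2)
          (fun _ _ => Finset.sum_nonneg fun _ _ => sq_nonneg _) (Finset.mem_univ i)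

end QuadraticForms

section Operator

variable {d : ℕ} {a : Euc d → Matrix (Fin d) (Fin d) ℝ} {b : Euc d → Euc d}
  {f g : Euc d → ℝ} {x : Euc d}

lemma gradient_apply (f : Euc d → ℝ) (x : Euc d) (i : Fin d) : ∇ f x i = pd f i x := by
  rw [pd, ← inner_gradient_left, EuclideanSpace.inner_single_right]
  simp

lemma differentiableAt_pd (hf : ContDiffAt ℝ 2 f x) (i : Fin d) : DifferentiableAt ℝ (pd f i) x :=
  ((hf.fderiv_right (m := 1) (by norm_num)).differentiableAt one_ne_zero).clm_apply
    (differentiableAt_const _)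

lemma pd2_eq_fderiv_fderiv (hf : ContDiffAt ℝ 2 f x) (i j : Fin d) :
    pd2 f i j x =
      fderiv ℝ (fderiv ℝ f) x (EuclideanSpace.single i 1) (EuclideanSpace.single j 1) := by
  have hfderiv := (hf.fderiv_right (m := 1) (by norm_num)).differentiableAt one_ne_zero
  unfold pd2 pd
  simp [fderiv_clm_apply hfderiv (differentiableAt_const _)]

lemma pd_add (hf : DifferentiableAt ℝ f x) (hg : DifferentiableAt ℝ g x) (i : Fin d) :
    pd (fun y => f y + g y) i x = pd f i x + pd g i x := by
  simp [pd, fderiv_fun_add hf hg]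

lemma pd2_add (hf : ContDiffAt ℝ 2 f x) (hg : ContDiffAt ℝ 2 g x) (i j : Fin d) :
    pd2 (fun y => f y + g y) i j x = pd2 f i j x + pd2 g i j x := by
  have hpd : pd (fun y => f y + g y) j =ᶠ[𝓝 x] fun y => pd f j y + pd g j y := by
    filter_upwards [hf.eventually (by simp), hg.eventually (by simp)] with y hfy hgy
    exact pd_add (hfy.differentiableAt two_ne_zero) (hgy.differentiableAt two_ne_zero) j
  rw [pd2, hpd.fderiv_eq, fderiv_fun_add (differentiableAt_pd hf j) (differentiableAt_pd hg j)]
  rfl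

lemma Lop_add (a : Euc d → Matrix (Fin d) (Fin d) ℝ) (b : Euc d → Euc d)
    (hf : ContDiffAt ℝ 2 f x) (hg : ContDiffAt ℝ 2 g x) :
    Lop a b (fun y => f y + g y) x = Lop a b f x + Lop a b g x := by
  simp only [Lop, pd_add (hf.differentiableAt two_ne_zero) (hg.differentiableAt two_ne_zero),
    pd2_add hf hg, mul_add, Finset.sum_add_distrib]
  ring

lemma pd_comp {φ : ℝ → ℝ} (hφ : DifferentiableAt ℝ φ (f x)) (hf : DifferentiableAt ℝ f x)
    (i : Fin d) : pd (fun y => φ (f y)) i x = deriv φ (f x) * pd f i x := by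
  have hchain : fderiv ℝ (fun y => φ (f y)) x = deriv φ (f x) • fderiv ℝ f x :=
    (hφ.hasDerivAt.comp_hasFDerivAt x hf.hasFDerivAt).fderiv
  simp [pd, hchain]

lemma pd2_comp {φ : ℝ → ℝ} (hφ : ContDiffAt ℝ 2 φ (f x)) (hf : ContDiffAt ℝ 2 f x)
    (i j : Fin d) : pd2 (fun y => φ (f y)) i j x =
      deriv (deriv φ) (f x) * (pd f i x * pd f j x) + deriv φ (f x) * pd2 f i j x := by
  have hpd : pd (fun y => φ (f y)) j =ᶠ[𝓝 x] fun y => deriv φ (f y) * pd f j y := by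
    filter_upwards [hf.eventually (by simp),
      hf.continuousAt.eventually (hφ.eventually (by simp))] with y hfy hφy
    exact pd_comp (hφy.differentiableAt two_ne_zero) (hfy.differentiableAt two_ne_zero) j
  have hφ' : DifferentiableAt ℝ (deriv φ) (f x) :=
    ((hφ.fderiv_right (m := 1) (by norm_num)).differentiableAt one_ne_zero).clm_apply
      (differentiableAt_const 1)
  have hproduct := (hφ'.hasDerivAt.comp_hasFDerivAt x
    (hf.differentiableAt two_ne_zero).hasFDerivAt).mul (differentiableAt_pd hf j).hasFDerivAt
  rw [pd2, hpd.fderiv_eq]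
  calc fderiv ℝ (fun y => deriv φ (f y) * pd f j y) x (EuclideanSpace.single i 1)
      = (deriv φ (f x) • fderiv ℝ (pd f j) x +
          pd f j x • deriv (deriv φ) (f x) • fderiv ℝ f x) (EuclideanSpace.single i 1) :=
        congrArg (· (EuclideanSpace.single i 1)) hproduct.fderiv
    _ = deriv φ (f x) * pd2 f i j x + pd f j x * (deriv (deriv φ) (f x) * pd f i x) := rfl
    _ = _ := by ring

lemma Lop_comp (a : Euc d → Matrix (Fin d) (Fin d) ℝ) (b : Euc d → Euc d) {φ : ℝ → ℝ}
    (hφ : ContDiffAt ℝ 2 φ (f x)) (hf : ContDiffAt ℝ 2 f x) :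
    Lop a b (fun y => φ (f y)) x =
      deriv (deriv φ) (f x) * quadForm (a x) (∇ f x) + deriv φ (f x) * Lop a b f x := by
  simp only [Lop, quadForm, gradient_apply, pd2_comp hφ hf,
    pd_comp (hφ.differentiableAt two_ne_zero) (hf.differentiableAt two_ne_zero),
    mul_add, Finset.sum_add_distrib, Finset.mul_sum]
  simp only [mul_assoc, mul_left_comm, add_assoc]

lemma Lop_const_mul (a : Euc d → Matrix (Fin d) (Fin d) ℝ) (b : Euc d → Euc d) (c : ℝ)
    (hf : ContDiffAt ℝ 2 f x) : Lop a b (fun y => c * f y) x = c * Lop a b f x := by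
  simp [Lop_comp a b (φ := (c * ·)) (by fun_prop) hf]

lemma Lop_const_sub (a : Euc d → Matrix (Fin d) (Fin d) ℝ) (b : Euc d → Euc d) (c : ℝ)
    (hf : ContDiffAt ℝ 2 f x) : Lop a b (fun y => c - f y) x = -Lop a b f x := by
  simp [Lop_comp a b (φ := (c - ·)) (by fun_prop) hf]

lemma Lop_sq (a : Euc d → Matrix (Fin d) (Fin d) ℝ) (b : Euc d → Euc d)
    (hf : ContDiffAt ℝ 2 f x) : Lop a b (fun y => f y ^ 2) x =
      2 * quadForm (a x) (∇ f x) + 2 * (f x * Lop a b f x) := by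
  have hderiv : deriv (fun t : ℝ => t ^ 2) = fun t => 2 * t := by
    ext t
    simp
  simp [Lop_comp a b (φ := fun t => t ^ 2) (by fun_prop) hf, hderiv, mul_assoc]

lemma continuousAt_Lop (ha : ContinuousAt a x) (hb : ContinuousAt b x)
    (hf : ContDiffAt ℝ 2 f x) : ContinuousAt (Lop a b f) x := by
  have hpd (i) : ContinuousAt (pd f i) x := (differentiableAt_pd hf i).continuousAt
  have hfderiv2 : ContinuousAt (fderiv ℝ (fderiv ℝ f)) x :=
    ((hf.fderiv_right (m := 1) (by norm_num)).fderiv_right (m := 0) (by norm_num)).continuousAt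
  have hpd2 (i j) : ContinuousAt (pd2 f i j) x := by
    refine ContinuousAt.congr_of_eventuallyEq (f := fun y => fderiv ℝ (fderiv ℝ f) y
      (EuclideanSpace.single i 1) (EuclideanSpace.single j 1)) (by fun_prop) ?_
    filter_upwards [hf.eventually (by simp)] with y hy using pd2_eq_fderiv_fderiv hy i j
  have ha' (i j) : ContinuousAt (fun y => a y i j) x :=
    continuousAt_pi.1 (continuousAt_pi.1 ha i) j
  have hb' (i) : ContinuousAt (fun y => b y i) x := by fun_prop
  exact (tendsto_finsetSum _ fun i _ => tendsto_finsetSum _ fun j _ => (ha' i j).mul (hpd2 i j)).add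
    (tendsto_finsetSum _ fun i _ => (hb' i).mul (hpd i))

lemma Lop_nonpos_of_isLocalMax (b : Euc d → Euc d) (ha : (a x).PosSemidef)
    (hf : ContDiffAt ℝ 2 f x) (hx : IsLocalMax f x) : Lop a b f x ≤ 0 := by
  have hgrad (i) : pd f i x = 0 := by simp [pd, hx.fderiv_eq_zero]
  have hhess := sum_mul_apply_nonpos_of_posSemidef ha
    (B := (fderiv ℝ (fderiv ℝ f) x).toBilinForm)
    (fderiv_fderiv_apply_self_nonpos_of_isLocalMax hf hx) fun i => EuclideanSpace.single i 1
  simpa [Lop, hgrad, pd2_eq_fderiv_fderiv hf] using hhess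

end Operator

section Ellipticity

variable {d : ℕ} {a : Euc d → Matrix (Fin d) (Fin d) ℝ} {b : Euc d → Euc d}

/-- `𝓛` is elliptic on `D` with continuous coefficients. Local uniform ellipticity is then
automatic by compactness. -/
structure EllipticOn (a : Euc d → Matrix (Fin d) (Fin d) ℝ) (b : Euc d → Euc d)
    (D : Set (Euc d)) : Prop where
  posDef : ∀ x ∈ D, (a x).PosDef
  continuousOn_diffusion : ContinuousOn a D
  continuousOn_drift : ContinuousOn b D

lemma LocallyHolderOn.continuousOn {E F : Type*} [PseudoMetricSpace E] [PseudoMetricSpace F]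
    {f : E → F} {s : Set E} (hf : LocallyHolderOn f s) : ContinuousOn f s := by
  intro x hx
  obtain ⟨C, r, hr, -, ε, hε, hfx⟩ := hf x hx
  refine (hfx.continuousOn hr x ⟨mem_ball_self hε, hx⟩).mono_of_mem_nhdsWithin ?_
  exact inter_mem (mem_nhdsWithin_of_mem_nhds (ball_mem_nhds x hε)) self_mem_nhdsWithin

lemma StandingH.continuous_diffusion (h : StandingH a b) : Continuous a := by
  refine continuous_matrix fun i j => continuous_iff_continuousAt.2 fun x => ?_
  obtain ⟨C, hC, hLip⟩ := h.aLip (‖x‖ + 1) (by positivity)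
  have hentry : LipschitzOnWith C.toNNReal (fun y => a y i j) (closedBall 0 (‖x‖ + 1)) := by
    refine LipschitzOnWith.of_dist_le_mul fun y hy z hz => ?_
    rw [mem_closedBall_zero_iff] at hy hz
    rw [Real.coe_toNNReal C hC.le, dist_eq_norm y z]
    exact (abs_apply_le_frob (a y - a z) i j).trans (hLip y z hy hz)
  refine hentry.continuousOn.continuousAt (mem_of_superset (isOpen_ball.mem_nhds ?_)
    ball_subset_closedBall)
  simp

lemma StandingH.ellipticOn_univ (h : StandingH a b) : EllipticOn a b univ where
  posDef x _ := h.posdef x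
  continuousOn_diffusion := h.continuous_diffusion.continuousOn
  continuousOn_drift := h.bHolder.continuousOn

end Ellipticity

section Penalization

lemma exists_pos_forall_add_mul_lt {X : Type*} [TopologicalSpace X] [T2Space X] {f g : X → ℝ}
    {S : Set X} (hS : IsCompact S) (hf : ContinuousOn f S)
    (hg : ContinuousOn g S) {M c : ℝ} (hfM : ∀ x ∈ S, f x ≤ M)
    (hgc : ∀ x ∈ S, f x = M → g x < c) : ∃ ε > 0, ∀ x ∈ S, f x + ε * g x < M + ε * c := by
  have hT : IsCompact (S ∩ g ⁻¹' Ici c) :=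
    hS.of_isClosed_subset (hg.preimage_isClosed_of_isClosed hS.isClosed isClosed_Ici)
      inter_subset_left
  obtain ⟨δ, hδ, hfδ⟩ := hT.exists_forall_le' (f := fun x => M - f x)
    (continuousOn_const.sub (hf.mono inter_subset_left)) (a := 0) fun x hx =>
      sub_pos.2 ((hfM x hx.1).lt_of_ne fun heq => (hgc x hx.1 heq).not_ge hx.2)
  obtain ⟨C, hC⟩ := hS.exists_bound_of_continuousOn hg
  refine ⟨δ / (|C| + |c| + 1), by positivity, fun x hx => ?_⟩
  rcases lt_or_ge (g x) c with hlt | hge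
  · have := mul_lt_mul_of_pos_left hlt (show 0 < δ / (|C| + |c| + 1) by positivity)
    linarith [hfM x hx]
  · have hgx : g x - c < |C| + |c| + 1 := by
      linarith [(le_abs_self (g x)).trans (hC x hx), le_abs_self C, neg_abs_le c]
    have hsmall : δ / (|C| + |c| + 1) * (g x - c) < δ := by
      rw [div_mul_eq_mul_div, div_lt_iff₀ (by positivity)]
      exact mul_lt_mul_of_pos_left hgx hδ
    linarith [hfδ x ⟨hx, hge⟩]

lemma exists_isLocalMax_add_mul {X : Type*} [MetricSpace X] [ProperSpace X] {f g : X → ℝ}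
    {x₀ : X} {U : Set X} (hU : U ∈ 𝓝 x₀) (hf : ContinuousOn f U) (hg : ContinuousOn g U)
    (hmax : IsMaxOn f U x₀) (hcontact : ∀ x ∈ U, x ≠ x₀ → f x = f x₀ → g x < g x₀) :
    ∃ ε > 0, ∃ x ∈ U, IsLocalMax (fun y => f y + ε * g y) x := by
  obtain ⟨r, hr, hrU⟩ := nhds_basis_closedBall.mem_iff.1 hU
  have hsphere : sphere x₀ r ⊆ U := sphere_subset_closedBall.trans hrU
  obtain ⟨ε, hε, hlt⟩ := exists_pos_forall_add_mul_lt (isCompact_sphere x₀ r) (hf.mono hsphere)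
    (hg.mono hsphere) (fun x hx => hmax (hsphere hx))
    fun x hx => hcontact x (hsphere hx) (ne_of_mem_sphere hx hr.ne')
  have hcont : ContinuousOn (fun y => f y + ε * g y) (closedBall x₀ r) :=
    (hf.mono hrU).add (continuousOn_const.mul (hg.mono hrU))
  obtain ⟨x, hx, hxmax⟩ := (isCompact_closedBall x₀ r).exists_isMaxOn
    (nonempty_closedBall.2 hr.le) hcont
  have hxball : x ∈ ball x₀ r := by
    refine lt_of_le_of_ne hx fun hxr => (hlt x hxr).not_ge ?_
    exact hxmax (mem_closedBall_self hr.le)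
  exact ⟨ε, hε, x, hrU hx, hxmax.isLocalMax
    (mem_of_superset (isOpen_ball.mem_nhds hxball) ball_subset_closedBall)⟩

end Penalization

section MaximumPrinciple

variable {d : ℕ} {a : Euc d → Matrix (Fin d) (Fin d) ℝ} {b : Euc d → Euc d} {D : Set (Euc d)}
  {w : Euc d → ℝ}

lemma frequently_le_of_Lop_pos {h : Euc d → ℝ} {x₀ : Euc d} (hD : D ∈ 𝓝 x₀)
    (hell : EllipticOn a b D) (hw : ContDiffOn ℝ 2 w D) (hLw : ∀ x ∈ D, 0 ≤ Lop a b w x)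
    (hmax : IsMaxOn w D x₀) (hh : ContDiffAt ℝ 2 h x₀) (hLh : 0 < Lop a b h x₀) :
    ∃ᶠ x in 𝓝[≠] x₀, w x = w x₀ ∧ h x₀ ≤ h x := by
  intro hcontact
  have hLh_near : ∀ᶠ x in 𝓝 x₀, 0 < Lop a b h x :=
    (continuousAt_Lop (hell.continuousOn_diffusion.continuousAt hD)
      (hell.continuousOn_drift.continuousAt hD) hh).eventually_const_lt hLh
  obtain ⟨U, hU, hgood⟩ := ((eventually_mem_nhds_iff.2 hD).and (hLh_near.and
    ((hh.eventually (by simp)).and (eventually_nhdsWithin_iff.1 hcontact)))).exists_mem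
  obtain ⟨ε, hε, m, hmU, hm⟩ := exists_isLocalMax_add_mul hU
    (fun x hx => (hw.continuousOn.continuousAt (hgood x hx).1).continuousWithinAt)
    (fun x hx => (hgood x hx).2.2.1.continuousAt.continuousWithinAt)
    (hmax.on_subset fun x hx => mem_of_mem_nhds (hgood x hx).1)
    fun x hx hne heq => not_le.1 fun hle => (hgood x hx).2.2.2 hne ⟨heq, hle⟩
  obtain ⟨hmD, hLhm, hhm, -⟩ := hgood m hmU
  have hwm : ContDiffAt ℝ 2 w m := hw.contDiffAt hmD
  have hεh : ContDiffAt ℝ 2 (fun y => ε * h y) m := contDiffAt_const.mul hhm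
  have hle : Lop a b w m + ε * Lop a b h m ≤ 0 := by
    rw [← Lop_const_mul a b ε hhm, ← Lop_add a b hwm hεh]
    exact Lop_nonpos_of_isLocalMax b (hell.posDef m (mem_of_mem_nhds hmD)).posSemidef
      (hwm.add hεh) hm
  linarith [hLw m (mem_of_mem_nhds hmD), mul_pos hε hLhm]

lemma exists_pos_Lop_exp_neg_mul_pos {q : Euc d → ℝ} {x₀ : Euc d} (b : Euc d → Euc d)
    (ha : (a x₀).PosDef) (hq : ContDiffAt ℝ 2 q x₀) (hgrad : ∇ q x₀ ≠ 0) :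
    ∃ α > 0, 0 < Lop a b (fun x => Real.exp (-α * q x)) x₀ := by
  have hQ : 0 < quadForm (a x₀) (∇ q x₀) := quadForm_pos ha hgrad
  obtain ⟨α, hα, hαL⟩ : ∃ α > 0, Lop a b q x₀ < α * quadForm (a x₀) (∇ q x₀) := by
    refine ⟨(|Lop a b q x₀| + 1) / quadForm (a x₀) (∇ q x₀), by positivity, ?_⟩
    rw [div_mul_cancel₀ _ hQ.ne']
    linarith [le_abs_self (Lop a b q x₀)]
  have hexp (c t : ℝ) : HasDerivAt (fun t => c * Real.exp (-α * t))
      (c * (-α * Real.exp (-α * t))) t := by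
    simpa [mul_comm] using (((hasDerivAt_id t).const_mul (-α)).exp).const_mul c
  have hderiv : deriv (fun t => Real.exp (-α * t)) = fun t => -α * Real.exp (-α * t) :=
    funext fun t => by simpa using (hexp 1 t).deriv
  have hderiv2 (t : ℝ) : deriv (deriv fun t => Real.exp (-α * t)) t =
      -α * (-α * Real.exp (-α * t)) := by
    rw [hderiv, (hexp (-α) t).deriv]
  have hpos := mul_pos (mul_pos hα (Real.exp_pos (-α * q x₀))) (sub_pos.2 hαL)
  refine ⟨α, hα, hpos.trans_eq ?_⟩
  rw [Lop_comp a b (φ := fun t => Real.exp (-α * t)) (by fun_prop) hq, hderiv2, hderiv]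
  ring

lemma gradient_normSq_sub_add_normSq_sub {E : Type*} [NormedAddCommGroup E]
    [InnerProductSpace ℝ E] [CompleteSpace E] (p x₀ : E) :
    ∇ (fun x => ‖x - p‖ ^ 2 + ‖x - x₀‖ ^ 2) x₀ = (2 : ℝ) • (x₀ - p) := by
  have hfderiv := ((hasFDerivAt_id x₀).sub_const p).norm_sq.add
    ((hasFDerivAt_id x₀).sub_const x₀).norm_sq
  refine ext_inner_right ℝ fun v => inner_gradient_left.trans ?_
  refine (congrArg (· v) hfderiv.fderiv).trans ?_
  simp [inner_smul_left, inner_sub_left]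

/-- The barrier is `exp (-α q)` with `q x = ‖x - p‖² + ‖x - x₀‖²`. In Hopf's lemma one passes to a
smaller interior ball touching only at `x₀`; here the second term of `q` makes the inequality
strict away from `x₀` instead. -/
lemma frequently_dist_lt_of_isMaxOn {x₀ p : Euc d} (hD : D ∈ 𝓝 x₀)
    (hell : EllipticOn a b D) (hw : ContDiffOn ℝ 2 w D) (hLw : ∀ x ∈ D, 0 ≤ Lop a b w x)
    (hmax : IsMaxOn w D x₀) (hp : p ≠ x₀) :
    ∃ᶠ x in 𝓝 x₀, w x = w x₀ ∧ dist x p < dist x₀ p := by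
  set q : Euc d → ℝ := fun x => ‖x - p‖ ^ 2 + ‖x - x₀‖ ^ 2
  have hq : ContDiff ℝ 2 q :=
    ((contDiff_id.sub contDiff_const).norm_sq ℝ).add ((contDiff_id.sub contDiff_const).norm_sq ℝ)
  have hgrad : ∇ q x₀ ≠ 0 := by
    rw [gradient_normSq_sub_add_normSq_sub]
    exact smul_ne_zero two_ne_zero (sub_ne_zero.2 hp.symm)
  obtain ⟨α, hα, hLexp⟩ :=
    exists_pos_Lop_exp_neg_mul_pos b (hell.posDef x₀ (mem_of_mem_nhds hD)) hq.contDiffAt hgrad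
  have hcontact := frequently_le_of_Lop_pos hD hell hw hLw hmax
    (contDiff_const.mul hq).exp.contDiffAt hLexp
  rw [frequently_nhdsWithin_iff] at hcontact
  refine hcontact.mono fun x ⟨⟨hx, hle⟩, hne⟩ => ⟨hx, ?_⟩
  have hqle : q x ≤ q x₀ := by
    rw [Real.exp_le_exp] at hle
    nlinarith
  have hpos : 0 < ‖x - x₀‖ := norm_pos_iff.2 (sub_ne_zero.2 hne)
  rw [dist_eq_norm, dist_eq_norm]
  refine lt_of_pow_lt_pow_left₀ 2 (norm_nonneg _) ?_
  simp only [q, sub_self, norm_zero] at hqle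
  nlinarith

lemma eventually_eq_of_isMaxOn {z : Euc d} (hD : D ∈ 𝓝 z)
    (hell : EllipticOn a b D) (hw : ContDiffOn ℝ 2 w D) (hLw : ∀ x ∈ D, 0 ≤ Lop a b w x)
    (hmax : IsMaxOn w D z) : ∀ᶠ x in 𝓝 z, w x = w z := by
  obtain ⟨r, hr, hrD⟩ := nhds_basis_closedBall.mem_iff.1 hD
  filter_upwards [ball_mem_nhds z (half_pos hr)] with p hp
  by_contra hpz
  have hcompact : IsCompact (closedBall z r ∩ w ⁻¹' {w z}) :=
    (isCompact_closedBall z r).of_isClosed_subset ((hw.continuousOn.mono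
      hrD).preimage_isClosed_of_isClosed isClosed_closedBall isClosed_singleton) inter_subset_left
  obtain ⟨x₀, ⟨hx₀r, hx₀ : w x₀ = w z⟩, hnearest⟩ :=
    hcompact.exists_isMinOn ⟨z, mem_closedBall_self hr.le, rfl⟩
      (continuous_id.dist (continuous_const (y := p))).continuousOn
  have hx₀_ball : x₀ ∈ ball z r := by
    have hle : dist x₀ p ≤ dist z p := hnearest ⟨mem_closedBall_self hr.le, rfl⟩
    rw [mem_ball, dist_comm] at hp
    rw [mem_ball]
    linarith [dist_triangle x₀ p z, dist_comm p z]
  have hball : ball z r ∈ 𝓝 x₀ := isOpen_ball.mem_nhds hx₀_ball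
  have hx₀D : D ∈ 𝓝 x₀ := mem_of_superset hball (ball_subset_closedBall.trans hrD)
  obtain ⟨x, ⟨hx, hlt⟩, hxr⟩ := ((frequently_dist_lt_of_isMaxOn hx₀D hell hw hLw
    (fun y hy => (hmax hy).trans_eq hx₀.symm) (p := p)
      fun h => hpz (by rw [h, hx₀])).and_eventually hball).exists
  exact hlt.not_ge (hnearest ⟨ball_subset_closedBall hxr, hx.trans hx₀⟩)

theorem eqOn_const_of_isMaxOn (hDo : IsOpen D) (hDc : IsPreconnected D)
    (hell : EllipticOn a b D) (hw : ContDiffOn ℝ 2 w D) (hLw : ∀ x ∈ D, 0 ≤ Lop a b w x)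
    {z : Euc d} (hz : z ∈ D) (hmax : IsMaxOn w D z) : ∀ x ∈ D, w x = w z := by
  have hopen : IsOpen {x ∈ D | w x = w z} := isOpen_iff_mem_nhds.2 fun y ⟨hy, hyz⟩ => by
    have hymax : IsMaxOn w D y := fun x hx => (hmax hx).trans_eq hyz.symm
    filter_upwards [hDo.mem_nhds hy,
      eventually_eq_of_isMaxOn (hDo.mem_nhds hy) hell hw hLw hymax] with x hx hxy
    exact ⟨hx, hxy.trans hyz⟩
  have hclosed : closure {x ∈ D | w x = w z} ∩ D ⊆ {x ∈ D | w x = w z} := by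
    rintro y ⟨hy, hyD⟩
    have hwy : ContinuousAt w y := hw.continuousOn.continuousAt (hDo.mem_nhds hyD)
    exact ⟨hyD, hwy.continuousWithinAt.eq_const_of_mem_closure hy fun x hx => hx.2⟩
  exact fun x hx => (hDc.subset_of_closure_inter_subset hopen ⟨z, hz, hz, rfl⟩ hclosed hx).2

end MaximumPrinciple

section Liouville

variable {d : ℕ} {a : Euc d → Matrix (Fin d) (Fin d) ℝ} {b : Euc d → Euc d} {D : Set (Euc d)}

lemma IsGroundState.exists_lt_forall_le (hrec : IsGroundState a b (fun _ => 0) (fun _ => 1) D)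
    (hDo : IsOpen D) {w : Euc d → ℝ} (hw : ContDiffOn ℝ 2 w D) (hLw : ∀ x ∈ D, 0 ≤ Lop a b w x)
    {M : ℝ} (hM : ∀ x ∈ D, w x < M) : ∃ M' < M, ∀ x ∈ D, w x ≤ M' := by
  have hsuper (x) (hx : x ∈ D) : Lop a b (fun y => M - w y) x ≤ 0 := by
    rw [Lop_const_sub a b M (hw.contDiffAt (hDo.mem_nhds hx))]
    exact neg_nonpos.2 (hLw x hx)
  obtain ⟨K, hK, -, hKD, κ, hκ, hout⟩ := hrec.2.2.2 ∅ isCompact_empty (empty_subset D)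
    (fun x => M - w x) ((contDiffOn_const.sub hw).mono sdiff_subset)
    (fun x hx => sub_pos.2 (hM x hx.1)) fun x hx => by simpa using hsuper x hx.1
  obtain ⟨δ, hδ, hin⟩ := hK.exists_forall_le' (f := fun x => M - w x)
    (continuousOn_const.sub (hw.continuousOn.mono hKD)) (a := 0)
    fun x hx => sub_pos.2 (hM x (hKD hx))
  refine ⟨M - min κ δ, by simp [hκ, hδ], fun x hx => ?_⟩
  by_cases hxK : x ∈ K
  · linarith [hin x hxK, min_le_right κ δ]
  · linarith [hout x ⟨hx, hxK⟩, min_le_left κ δ]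

lemma IsGroundState.exists_const_of_Lop_nonneg
    (hrec : IsGroundState a b (fun _ => 0) (fun _ => 1) D) (hDo : IsOpen D)
    (hDc : IsPreconnected D) (hell : EllipticOn a b D) {w : Euc d → ℝ} (hw : ContDiffOn ℝ 2 w D)
    (hLw : ∀ x ∈ D, 0 ≤ Lop a b w x) (hbdd : BddAbove (w '' D)) : ∃ c, ∀ x ∈ D, w x = c := by
  set M := sSup (w '' D)
  have hM (x) (hx : x ∈ D) : w x ≤ M := le_csSup hbdd (mem_image_of_mem w hx)
  by_cases hattained : ∃ z ∈ D, w z = M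
  · obtain ⟨z, hz, hzM⟩ := hattained
    exact ⟨w z, eqOn_const_of_isMaxOn hDo hDc hell hw hLw hz
      fun x hx => (hM x hx).trans_eq hzM.symm⟩
  · rcases D.eq_empty_or_nonempty with rfl | hne
    · exact ⟨0, fun x hx => hx.elim⟩
    have hlt (x) (hx : x ∈ D) : w x < M := (hM x hx).lt_of_ne fun h => hattained ⟨x, hx, h⟩
    obtain ⟨M', hM', hle⟩ := hrec.exists_lt_forall_le hDo hw hLw hlt
    exact absurd (csSup_le (hne.image w) (forall_mem_image.2 hle)) hM'.not_ge

end Liouville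

theorem statement6_general {d : ℕ} {a : Euc d → Matrix (Fin d) (Fin d) ℝ} {b : Euc d → Euc d}
    {D : Set (Euc d)} (hDo : IsOpen D) (hDc : IsPreconnected D) (hell : EllipticOn a b D)
    (hrec : IsGroundState a b (fun _ => 0) (fun _ => 1) D) {u : Euc d → ℝ}
    (hu : ContDiffOn ℝ 2 u D) (hbdd : ∃ C, ∀ x ∈ D, |u x| ≤ C)
    (huLu : ∀ x ∈ D, 0 ≤ u x * Lop a b u x) : ∃ c, ∀ x ∈ D, u x = c := by
  have hC2 (x) (hx : x ∈ D) : ContDiffAt ℝ 2 u x := hu.contDiffAt (hDo.mem_nhds hx)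
  have hLsq (x) (hx : x ∈ D) : Lop a b (fun y => u y ^ 2) x =
      2 * quadForm (a x) (∇ u x) + 2 * (u x * Lop a b u x) := Lop_sq a b (hC2 x hx)
  have hsub (x) (hx : x ∈ D) : 0 ≤ Lop a b (fun y => u y ^ 2) x := by
    linarith [hLsq x hx, huLu x hx, quadForm_nonneg (hell.posDef x hx).posSemidef (∇ u x)]
  have hsq_bdd : BddAbove ((fun y => u y ^ 2) '' D) := by
    obtain ⟨C, hC⟩ := hbdd
    exact ⟨C ^ 2, forall_mem_image.2 fun x hx => sq_le_sq.2 ((hC x hx).trans (le_abs_self C))⟩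
  obtain ⟨c, hc⟩ := hrec.exists_const_of_Lop_nonneg hDo hDc hell (hu.pow 2) hsub hsq_bdd
  refine hDo.exists_is_const_of_fderiv_eq_zero (𝕜 := ℝ) hDc (hu.differentiableOn two_ne_zero)
    fun x hx => ?_
  have hmax : IsLocalMax (fun y => u y ^ 2) x := by
    filter_upwards [hDo.mem_nhds hx] with y hy using (hc y hy).trans_le (hc x hx).ge
  have hLsq_nonpos := Lop_nonpos_of_isLocalMax b (hell.posDef x hx).posSemidef
    ((hC2 x hx).pow 2) hmax
  have hgrad : ∇ u x = 0 := by
    by_contra hne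
    linarith [hLsq x hx, huLu x hx, quadForm_pos (hell.posDef x hx) hne]
  simpa using (toDual_gradient (𝕜 := ℝ) (f := u) (x := x)).symm.trans (by rw [hgrad, map_zero])

/-- Corollary 2.2: if `1` is a ground state of `𝓛` (recurrence) and `V ≤ 0` is bounded,
then every bounded solution of `𝓛u + Vu = 0` is constant. -/
theorem statement6 {d : ℕ} (hd : 1 ≤ d)
    (a : Euc d → Matrix (Fin d) (Fin d) ℝ) (b : Euc d → Euc d)
    (hstand : StandingH a b)
    (hrec : IsGroundState a b (fun _ => 0) (fun _ => 1) Set.univ)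
    (V : Euc d → ℝ) (hVreg : LocallyHolder V)
    (hVbdd : ∃ C, ∀ x, |V x| ≤ C) (hVneg : ∀ x, V x ≤ 0)
    (u : Euc d → ℝ) (huC2 : ContDiff ℝ 2 u) (hubdd : ∃ C, ∀ x, |u x| ≤ C)
    (hsol : ∀ x, Lop a b u x + V x * u x = 0) :
    ∃ c : ℝ, ∀ x, u x = c := by
  obtain ⟨c, hc⟩ := statement6_general isOpen_univ isPreconnected_univ hstand.ellipticOn_univ hrec
    huC2.contDiffOn (by simpa using hubdd) fun x _ => by
      have huLu : u x * Lop a b u x = -V x * u x ^ 2 := by linear_combination u x * hsol x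
      rw [huLu]
      exact mul_nonneg (neg_nonneg.2 (hVneg x)) (sq_nonneg _)
  exact ⟨c, fun x => hc x (mem_univ x)⟩
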